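/- For every real z > 0, ∫₀^∞ ((cosh x - 1)/(2 sinh²(x/(2z))) - z²) / (x(eˣ - 1)) dx = ln G(z+1) - (z²/2)·ln z + ((z² - z)/2)·ln(2π), where G is the Barnes G-function. -/

import Mathlib

/-!
Since `(cosh x - 1) / (exp x - 1) = (1 - exp (-x)) / 2`, the substitution `x = z t` turns the
integral into `∫ ((1 - exp (-z t)) s(t) - z² / (exp (z t) - 1)) dt / t`, where
`s(t) = 1 / (4 sinh² (t / 2)) = ∑ m exp (-m t)` over `m ≥ 1`. Formally, termwise integration
with Frullani's formula gives `∑ m log (1 + z / m)`, the divergent part of `log G(z + 1)`. To regularize,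
compare with the same expression at `z = 1`, where the integrand vanishes identically. With
`F(t) = 1 / (exp t - 1) - 1 / t`, so that `F' = 1 / t² - s`, the integrand is exactly

`s(t) P(t) / t + (z² - z) F'(t) + z² (F(t) - F(z t)) / t`,
`P(t) = (1 - exp (-z t)) - z² (1 - exp (-t)) + (z² - z) t`.

* `P` has a third-order zero at `0`, so the series for `s` may be integrated term by term
  (`hasSum_integral`). With `a_m(z) = m log (1 + z / m) + z² / (2 m) - z`, the logarithm of the
  `m`-th factor of the Weierstrass product, this gives `∑ (a_m(z) - z² a_m(1))`.
* `∫ F' = F(∞) - F(0⁺) = 1 / 2` (`integral_F_deriv`).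
* Frullani's formula for `F` gives `-(log z) / 2` (`integral_F_frullani`).

Finally `∑ a_m(1) = 1 + γ / 2 - log (2π) / 2` by Stirling's formula and the definition of `γ`
(`hasSum_term_one`), which accounts for all the constants and also shows that `∑ a_m(z)` converges.
-/

open Real Set

/-- The Barnes `G`-function evaluated at `z + 1`, defined for real `z` by its
Weierstrass product:
`G(z+1) = (2π)^(z/2) · exp(-(z + z²(1+γ))/2) · ∏_{k=1}^∞ (1 + z/k)^k · exp(z²/(2k) - z)`,
where `γ` is the Euler–Mascheroni constant. -/
noncomputable def barnesGSucc (z : ℝ) : ℝ :=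
  (2 * π) ^ (z / 2) * Real.exp (-(z + z ^ 2 * (1 + Real.eulerMascheroniConstant)) / 2) *
    ∏' k : ℕ, (1 + z / (k + 1)) ^ (k + 1) * Real.exp (z ^ 2 / (2 * (k + 1)) - z)

open Filter Topology MeasureTheory

namespace BarnesG

/-! ### The logarithm of the Weierstrass product -/

/-- Logarithm of the `(k + 1)`-st factor of the Weierstrass product of `G(z + 1)`; the index is
shifted by one, as in `barnesGSucc`. -/
noncomputable def term (z : ℝ) (k : ℕ) : ℝ :=
  (k + 1) * Real.log (1 + z / (k + 1)) + z ^ 2 / (2 * (k + 1)) - z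

lemma term_one_nonneg (k : ℕ) : 0 ≤ term 1 k := by
  have hk : (0 : ℝ) < k + 1 := by positivity
  have h := Real.le_log_one_add_of_nonneg (x := 1 / ((k : ℝ) + 1)) (by positivity)
  have h2 : 1 / ((k : ℝ) + 1) - 1 / (2 * (k + 1) ^ 2) ≤ 2 * (1 / ((k : ℝ) + 1)) / (1 / (k + 1) + 2) := by
    rw [← sub_nonneg]
    have : 2 * (1 / ((k : ℝ) + 1)) / (1 / (k + 1) + 2) - (1 / ((k : ℝ) + 1) - 1 / (2 * (k + 1) ^ 2))
      = 1 / (2 * ((k : ℝ) + 1) ^ 2 * (2 * (k + 1) + 1)) := by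
      field_simp
      ring
    rw [this]; positivity
  have h3 := mul_le_mul_of_nonneg_left (h2.trans h) hk.le
  have h4 : ((k : ℝ) + 1) * (1 / ((k : ℝ) + 1) - 1 / (2 * (k + 1) ^ 2)) = 1 - 1 / (2 * (k + 1)) := by
    field_simp
  unfold term
  rw [h4] at h3
  norm_num at h3 ⊢
  linarith

/-- The logarithms telescope by Abel summation. -/
lemma sum_term_one (n : ℕ) :
    ∑ k ∈ Finset.range n, term 1 k =
      n * Real.log (n + 1) - Real.log n.factorial + (harmonic n : ℝ) / 2 - n := by
  induction n with
  | zero => simp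
  | succ n ih =>
    rw [Finset.sum_range_succ, ih, harmonic_succ, Nat.factorial_succ]
    have h0 : (0 : ℝ) < n + 1 := by positivity
    have hf : (n.factorial : ℝ) ≠ 0 := by positivity
    have h1 : (1 : ℝ) + 1 / (n + 1) = (n + 1 + 1) / (n + 1) := by field_simp
    unfold term
    push_cast
    rw [h1, Real.log_div (by positivity) (by positivity), Real.log_mul (by positivity) hf]
    field_simp
    ring

/-- The value of the product at `z = 1`, equivalent to `G(2) = 1`. It follows from Stirling's formula
and `H_n - log n → γ`; the terms being nonnegative, convergence of the partial sums suffices. -/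
lemma hasSum_term_one :
    HasSum (term 1) (1 + Real.eulerMascheroniConstant / 2 - Real.log (2 * π) / 2) := by
  rw [hasSum_iff_tendsto_nat_of_nonneg term_one_nonneg]
  have h1 := (Real.tendsto_mul_log_one_add_div_atTop 1).comp tendsto_natCast_atTop_atTop
  have h2 := (Stirling.tendsto_stirlingSeq_sqrt_pi).log (by positivity)
  have h3 := Real.tendsto_harmonic_sub_log
  have h4 := (((h1.sub h2).sub_const (Real.log 2 / 2))).add (h3.div_const 2)
  have e : 1 - Real.log √π - Real.log 2 / 2 + Real.eulerMascheroniConstant / 2 =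
      1 + Real.eulerMascheroniConstant / 2 - Real.log (2 * π) / 2 := by
    rw [Real.log_sqrt pi_pos.le, Real.log_mul (by norm_num) pi_ne_zero]; ring
  rw [e] at h4
  refine h4.congr' ?_
  filter_upwards [eventually_gt_atTop 0] with n hn
  have hn' : (0 : ℝ) < n := by exact_mod_cast hn
  have e1 : 1 + 1 / (n : ℝ) = (n + 1) / n := by field_simp
  rw [sum_term_one, Stirling.log_stirlingSeq_formula]
  simp only [Function.comp]
  rw [e1, Real.log_div (by positivity) (by positivity), Real.log_div (by positivity) (by positivity),
    Real.log_mul (by positivity) (by positivity), Real.log_exp]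
  ring

/-- Summability of the logarithms makes the product `Multipliable`, so that `∏'` in `barnesGSucc` is
not a junk value. -/
lemma log_barnesGSucc {z S : ℝ} (hz : 0 < z) (h : HasSum (term z) S) :
    Real.log (barnesGSucc z) =
      z / 2 * Real.log (2 * π) - (z + z ^ 2 * (1 + Real.eulerMascheroniConstant)) / 2 + S := by
  have hp := h.rexp.tprod_eq
  have e : (fun k : ℕ ↦ (1 + z / ((k : ℝ) + 1)) ^ (k + 1) *
      Real.exp (z ^ 2 / (2 * ((k : ℝ) + 1)) - z)) = Real.exp ∘ term z := by
    funext k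
    have : 0 < 1 + z / ((k : ℝ) + 1) := by positivity
    simp only [Function.comp, term]
    rw [add_sub_assoc, Real.exp_add, mul_comm ((k : ℝ) + 1), Real.exp_mul, Real.exp_log this]
    congr 1
    rw [← Real.rpow_natCast]; push_cast; rfl
  unfold barnesGSucc
  rw [e, hp, Real.log_mul (by positivity) (by positivity), Real.log_mul (by positivity) (by positivity),
    Real.log_rpow (by positivity), Real.log_exp, Real.log_exp]
  ring

/-! ### Estimates and the elementary Frullani integral -/

lemma abs_exp_taylor_le {x : ℝ} (hx : 0 ≤ x) :
    |1 - Real.exp (-x) - x + x ^ 2 / 2| ≤ x ^ 3 := by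
  rw [abs_le]
  rcases le_total x 1 with h | h
  · have := Real.exp_bound (x := -x) (by rw [abs_neg, abs_of_nonneg hx]; exact h) (n := 3) (by norm_num)
    rw [abs_neg, abs_of_nonneg hx, abs_le] at this
    norm_num [Finset.sum_range_succ, Nat.factorial] at this
    have h3 : 0 ≤ x ^ 3 := by positivity
    constructor <;> nlinarith
  · have h1 := Real.one_sub_le_exp_neg x
    have h2 : Real.exp (-x) ≤ 1 := Real.exp_le_one_iff.2 (by linarith)
    constructor <;> nlinarith [pow_le_pow_left₀ zero_le_one h 2, pow_le_pow_left₀ zero_le_one h 3, mul_nonneg (sub_nonneg.2 h) (sq_nonneg x)]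

/-- The combination of `1 - exp (-z t)`, `1 - exp (-t)` and `t` that vanishes to third order at
`t = 0`. -/
noncomputable def P (z t : ℝ) : ℝ :=
  (1 - Real.exp (-(z * t))) - z ^ 2 * (1 - Real.exp (-t)) + (z ^ 2 - z) * t

lemma abs_P_le {z t : ℝ} (hz : 0 < z) (ht : 0 ≤ t) : |P z t| ≤ (z ^ 3 + z ^ 2) * t ^ 3 := by
  have h1 := abs_exp_taylor_le (x := z * t) (by positivity)
  have h2 := mul_le_mul_of_nonneg_left (abs_exp_taylor_le ht) (sq_nonneg z)
  rw [abs_le] at h1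
  rw [← abs_of_nonneg (sq_nonneg z), ← abs_mul, abs_of_nonneg (sq_nonneg z), abs_le] at h2
  unfold P
  rw [abs_le]
  constructor <;> nlinarith

/-- A function bounded by both `A` and `B / t ^ 2` is dominated by `(A + B) / (1 + t ^ 2)`. -/
lemma integrableOn_of_bounds {g : ℝ → ℝ} {A B : ℝ} (hc : ContinuousOn g (Ioi 0))
    (hA : ∀ t, 0 < t → |g t| ≤ A) (hB : ∀ t, 0 < t → |g t| * t ^ 2 ≤ B) :
    IntegrableOn g (Ioi 0) := by
  refine Integrable.mono' ((integrable_inv_one_add_sq.const_mul (A + B)).integrableOn)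
    (hc.aestronglyMeasurable measurableSet_Ioi) ?_
  filter_upwards [ae_restrict_mem measurableSet_Ioi] with t ht
  have := hA t ht
  have := hB t ht
  rw [Real.norm_eq_abs, ← div_eq_mul_inv, le_div_iff₀ (by positivity)]
  linarith

/-- Frullani's integral of `exp` between the scales `m` and `m + c`. -/
lemma frullani_exp {m c : ℝ} (hm : 0 < m) (hc : 0 < c) :
    IntegrableOn (fun t ↦ Real.exp (-(m * t)) * (1 - Real.exp (-(c * t))) / t) (Ioi 0) ∧
    ∫ t in Ioi 0, Real.exp (-(m * t)) * (1 - Real.exp (-(c * t))) / t = Real.log (1 + c / m) := by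
  have hint : IntegrableOn (fun t ↦ Real.exp (-(m * t)) * (1 - Real.exp (-(c * t))) / t) (Ioi 0) := by
    have hi : IntegrableOn (fun t ↦ c * Real.exp (-m * t)) (Ioi 0) :=
      (integrableOn_exp_mul_Ioi (a := -m) (by linarith) 0).const_mul c
    refine Integrable.mono' hi ?_ ?_
    · refine ContinuousOn.aestronglyMeasurable ?_ measurableSet_Ioi
      refine ContinuousOn.div (by fun_prop) (by fun_prop) ?_
      intro x hx; exact (ne_of_gt hx)
    · filter_upwards [ae_restrict_mem measurableSet_Ioi] with t ht
      have ht' : 0 < t := ht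
      have h1 := Real.one_sub_le_exp_neg (c * t)
      have h2 : Real.exp (-(c * t)) ≤ 1 := Real.exp_le_one_iff.2 (by nlinarith)
      rw [Real.norm_eq_abs, abs_of_nonneg (div_nonneg (mul_nonneg (Real.exp_pos _).le (by linarith)) ht'.le),
        div_le_iff₀ ht', neg_mul]
      nlinarith [Real.exp_pos (-(m * t))]
  refine ⟨hint, ?_⟩
  have e : ∀ t : ℝ, Real.exp (-(m * t)) * (1 - Real.exp (-(c * t))) / t =
      t⁻¹ • (Real.exp (-(m * t)) - Real.exp (-((m + c) * t))) := by
    intro t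
    rw [add_mul, neg_add, Real.exp_add, smul_eq_mul]; ring
  simp only [e] at hint ⊢
  have hcont : Continuous fun t : ℝ ↦ Real.exp (-t) := by fun_prop
  rw [Frullani.integral_Ioi_eq (f := fun t ↦ Real.exp (-t)) (L := 1) (R := 0)
    (hcont.locallyIntegrable.locallyIntegrableOn _) hm (by positivity) ?_ ?_ hint]
  · simp only [sub_zero, smul_eq_mul, mul_one]
    congr 1; field_simp
  · have := hcont.tendsto 0
    simp only [neg_zero, Real.exp_zero] at this
    exact this.mono_left nhdsWithin_le_nhds
  · exact Real.tendsto_exp_neg_atTop_nhds_zero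

/-! ### Termwise integration of the series for `1 / (4 sinh²)` -/

/-- In terms of the product, the integral of the `k`-th summand compares the factor at `z` with
the one at `1`: the counterterms `z²/(2(k+1))` cancel and the `-z` ones match the linear part of `P`. -/
lemma integral_summand {z : ℝ} (hz : 0 < z) (k : ℕ) :
    IntegrableOn (fun t ↦ (k + 1) * Real.exp (-((k + 1) * t)) * (P z t / t)) (Ioi 0) ∧
    ∫ t in Ioi 0, (k + 1) * Real.exp (-((k + 1) * t)) * (P z t / t) =
      term z k - z ^ 2 * term 1 k := by
  have hk : (0 : ℝ) < k + 1 := by positivity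
  obtain ⟨i1, e1⟩ := frullani_exp hk hz
  obtain ⟨i2, e2⟩ := frullani_exp hk one_pos
  have i3 : IntegrableOn (fun t ↦ Real.exp (-((k : ℝ) + 1) * t)) (Ioi 0) :=
    integrableOn_exp_mul_Ioi (by linarith) 0
  have e3 := integral_exp_mul_Ioi (a := -((k : ℝ) + 1)) (by linarith) 0
  have hEq : EqOn (fun t ↦ ((k : ℝ) + 1) * (Real.exp (-((k + 1) * t)) * (1 - Real.exp (-(z * t))) / t)
      - (z ^ 2 * (k + 1)) * (Real.exp (-((k + 1) * t)) * (1 - Real.exp (-(1 * t))) / t)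
      + ((z ^ 2 - z) * (k + 1)) * Real.exp (-((k : ℝ) + 1) * t))
      (fun t ↦ (k + 1) * Real.exp (-((k + 1) * t)) * (P z t / t)) (Ioi 0) := by
    intro t ht
    have : t ≠ 0 := ne_of_gt ht
    simp only [P, one_mul, neg_mul]
    field_simp
  constructor
  · exact IntegrableOn.congr_fun (((i1.const_mul _).sub (i2.const_mul _)).add (i3.const_mul _)) hEq
      measurableSet_Ioi
  · rw [← setIntegral_congr_fun measurableSet_Ioi hEq]
    rw [integral_add (μ := volume.restrict (Ioi 0)) (f := fun t ↦
        ((k : ℝ) + 1) * (Real.exp (-((k + 1) * t)) * (1 - Real.exp (-(z * t))) / t)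
          - (z ^ 2 * (k + 1)) * (Real.exp (-((k + 1) * t)) * (1 - Real.exp (-(1 * t))) / t))
      ((i1.const_mul _).sub (i2.const_mul _)) (i3.const_mul _),
      integral_sub (i1.const_mul _) (i2.const_mul _)]
    simp only [integral_const_mul]
    rw [e1, e2, e3]
    simp only [term, mul_zero, Real.exp_zero]
    field_simp
    ring

lemma integral_norm_summand_le {z : ℝ} (hz : 0 < z) (k : ℕ) :
    ∫ t in Ioi 0, ‖((k : ℝ) + 1) * Real.exp (-((k + 1) * t)) * (P z t / t)‖ ≤
      (2 * (z ^ 3 + z ^ 2)) * (1 / (((k : ℝ) + 1) ^ 2)) := by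
  have hk : (0 : ℝ) < k + 1 := by positivity
  have h := Real.integral_rpow_mul_exp_neg_mul_Ioi (a := 3) (r := (k : ℝ) + 1) (by norm_num) hk
  have hG : Real.Gamma 3 = 2 := by
    have := Real.Gamma_nat_eq_factorial 2
    norm_num only [Nat.cast_ofNat] at this
    rw [this]
  have e : ∀ t : ℝ, t ^ ((3 : ℝ) - 1) = t ^ 2 := by
    intro t; norm_num
  simp only [e, hG] at h
  have h' : ∫ t in Ioi 0, t ^ 2 * Real.exp (-(((k : ℝ) + 1) * t)) = (1 / ((k : ℝ) + 1)) ^ 3 * 2 := by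
    rw [h]; norm_cast
  have hi : IntegrableOn (fun t ↦ t ^ 2 * Real.exp (-(((k : ℝ) + 1) * t))) (Ioi 0) := by
    by_contra hn
    rw [integral_undef hn] at h'
    have : 0 < (1 / ((k : ℝ) + 1)) ^ 3 * 2 := by positivity
    linarith
  calc _ ≤ ∫ t in Ioi 0, ((k + 1) * (z ^ 3 + z ^ 2)) * (t ^ 2 * Real.exp (-(((k : ℝ) + 1) * t))) := by
        refine setIntegral_mono_on (integral_summand hz k).1.norm (hi.const_mul _) measurableSet_Ioi ?_
        intro t ht
        have ht' : 0 < t := ht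
        have hP : |P z t / t| ≤ (z ^ 3 + z ^ 2) * t ^ 2 := by
          rw [abs_div, abs_of_pos ht', div_le_iff₀ ht']
          calc _ ≤ _ := abs_P_le hz ht'.le
            _ = _ := by ring
        rw [norm_mul, Real.norm_of_nonneg (by positivity), Real.norm_eq_abs]
        calc _ ≤ ((k : ℝ) + 1) * Real.exp (-((k + 1) * t)) * ((z ^ 3 + z ^ 2) * t ^ 2) := by gcongr
          _ = _ := by ring
    _ = _ := by
      rw [integral_const_mul, h']
      field_simp

/-- `s t = 1 / (4 sinh² (t / 2)) = ∑_{m ≥ 1} m exp (-m t)`. -/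
noncomputable def s (t : ℝ) : ℝ := Real.exp t / (Real.exp t - 1) ^ 2

/-- The derivative of the geometric series at `exp (-t)`. -/
lemma hasSum_s {t : ℝ} (ht : 0 < t) :
    HasSum (fun k : ℕ ↦ ((k : ℝ) + 1) * Real.exp (-((k + 1) * t))) (s t) := by
  have hr : ‖Real.exp (-t)‖ < 1 := by
    rw [Real.norm_of_nonneg (Real.exp_pos _).le]; exact Real.exp_lt_one_iff.2 (by linarith)
  have h : HasSum (fun n : ℕ ↦ (n : ℝ) * Real.exp (-t) ^ n) (s t) := by
    have e2 : Real.exp (-t) / (1 - Real.exp (-t)) ^ 2 = s t := by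
      have h0 : 1 < Real.exp t := Real.one_lt_exp_iff.2 ht
      have h1 : Real.exp t - 1 ≠ 0 := by linarith
      have h2 : 1 - (Real.exp t)⁻¹ ≠ 0 := by
        have : (Real.exp t)⁻¹ < 1 := inv_lt_one_of_one_lt₀ h0
        linarith
      have h3 : 1 - (Real.exp t)⁻¹ = (Real.exp t - 1) / Real.exp t := by
        rw [sub_div, div_self (Real.exp_pos t).ne', one_div]
      rw [s, Real.exp_neg, h3]
      field_simp
    rw [← e2]
    exact hasSum_coe_mul_geometric_of_norm_lt_one hr
  -- The term of index `0` vanishes, so the series may be started at `1`.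
  have h' : HasSum (fun n : ℕ ↦ ((n + 1 : ℕ) : ℝ) * Real.exp (-t) ^ (n + 1)) (s t) := by
    have := (hasSum_nat_add_iff' (f := fun n : ℕ ↦ (n : ℝ) * Real.exp (-t) ^ n) 1).2 h
    simpa only [Finset.sum_range_one, Nat.cast_zero, zero_mul, sub_zero] using this
  refine h'.congr_fun ?_
  intro k
  rw [← Real.exp_nat_mul, mul_neg]; push_cast; rfl

/-- Termwise integration of the expansion of `s`; the third-order zero of `P` makes the `L¹` norms of
the summands `O(1 / k ^ 2)`. -/
lemma hasSum_integral {z : ℝ} (hz : 0 < z) :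
    HasSum (fun k ↦ term z k - z ^ 2 * term 1 k) (∫ t in Ioi 0, s t * (P z t / t)) := by
  have h := hasSum_integral_of_summable_integral_norm (μ := volume.restrict (Ioi 0))
    (F := fun (k : ℕ) (t : ℝ) ↦ ((k : ℝ) + 1) * Real.exp (-((k + 1) * t)) * (P z t / t))
    (fun k ↦ (integral_summand hz k).1) ?_
  · simp only [fun k ↦ (integral_summand hz k).2] at h
    convert! h using 1
    refine setIntegral_congr_fun measurableSet_Ioi ?_
    intro t ht
    exact ((hasSum_s ht).mul_right _).tsum_eq.symm
  · refine Summable.of_nonneg_of_le (fun k ↦ integral_nonneg fun t ↦ norm_nonneg _)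
      (integral_norm_summand_le hz) (Summable.mul_left _ ?_)
    have := (summable_nat_add_iff 1).2 (Real.summable_one_div_nat_pow.2 (one_lt_two))
    exact_mod_cast this

/-- The bounds come from `t ≤ 2 sinh (t / 2)` and `t ^ 4 / 24 ≤ 4 sinh² (t / 2)`. -/
lemma s_bounds {t : ℝ} (ht : 0 < t) : 0 < s t ∧ s t * t ^ 2 ≤ 1 ∧ s t * t ^ 4 ≤ 24 := by
  have h1 : 0 < Real.exp t - 1 := by linarith [Real.add_one_lt_exp ht.ne']
  have he := Real.exp_pos t
  refine ⟨by unfold s; positivity, ?_, ?_⟩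
  · have := Real.self_le_sinh_iff.2 (half_pos ht).le
    rw [Real.sinh_eq] at this
    have h2 : Real.exp t = Real.exp (t / 2) ^ 2 := by rw [← Real.exp_nat_mul]; congr 1; push_cast; ring
    have h3 : Real.exp (-(t / 2)) = (Real.exp (t / 2))⁻¹ := Real.exp_neg _
    have h4 := Real.exp_pos (t / 2)
    have h5 : t * Real.exp (t / 2) ≤ Real.exp t - 1 := by
      rw [h2]
      have : t ≤ Real.exp (t / 2) - (Real.exp (t / 2))⁻¹ := by rw [← h3]; linarith
      have := mul_le_mul_of_nonneg_right this h4.le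
      rw [sub_mul, inv_mul_cancel₀ h4.ne'] at this
      nlinarith
    unfold s
    rw [div_mul_eq_mul_div, div_le_one (by positivity)]
    calc _ = (t * Real.exp (t / 2)) ^ 2 := by rw [mul_pow, ← h2]; ring
      _ ≤ _ := by gcongr
  · have h2 := Real.sum_le_exp_of_nonneg ht.le 5
    norm_num [Finset.sum_range_succ, Nat.factorial] at h2
    have h3 := Real.one_sub_le_exp_neg t
    unfold s
    rw [div_mul_eq_mul_div, div_le_iff₀ (by positivity)]
    have h4 : Real.exp t * Real.exp (-t) = 1 := by rw [← Real.exp_add]; simp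
    have h5 : (Real.exp t - 1) ^ 2 = Real.exp t * (Real.exp t - 2 + Real.exp (-t)) := by
      linear_combination (-1) * h4
    rw [h5]
    have : t ^ 4 ≤ 24 * (Real.exp t - 2 + Real.exp (-t)) := by
      have : 0 < t ^ 2 := by positivity
      have : 0 < t ^ 3 := by positivity
      linarith
    nlinarith

lemma exp_sub_one_ne {t : ℝ} (ht : 0 < t) : Real.exp t - 1 ≠ 0 := by
  linarith [Real.add_one_lt_exp ht.ne']

lemma integrableOn_sP {z : ℝ} (hz : 0 < z) :
    IntegrableOn (fun t ↦ s t * (P z t / t)) (Ioi 0) := by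
  have hP : ∀ t, 0 < t → |s t * (P z t / t)| ≤ s t * ((z ^ 3 + z ^ 2) * t ^ 2) := by
    intro t ht
    have hs := (s_bounds ht).1
    rw [abs_mul, abs_of_pos hs]
    refine mul_le_mul_of_nonneg_left ?_ hs.le
    rw [abs_div, abs_of_pos ht, div_le_iff₀ ht]
    calc _ ≤ _ := abs_P_le hz ht.le
      _ = _ := by ring
  refine integrableOn_of_bounds (A := z ^ 3 + z ^ 2) (B := (z ^ 3 + z ^ 2) * 24) ?_ ?_ ?_
  · have h1 : ContinuousOn s (Ioi 0) := by
      refine ContinuousOn.div (by fun_prop) (by fun_prop) fun t ht ↦ pow_ne_zero _ (exp_sub_one_ne ht)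
    have h2 : ContinuousOn (fun t ↦ P z t / t) (Ioi 0) := by
      unfold P
      refine ContinuousOn.div (by fun_prop) (by fun_prop) fun t ht ↦ ne_of_gt ht
    exact h1.mul h2
  · intro t ht
    refine (hP t ht).trans ?_
    have := mul_le_mul_of_nonneg_left (s_bounds ht).2.1 (show 0 ≤ z ^ 3 + z ^ 2 by positivity)
    linarith
  · intro t ht
    refine (mul_le_mul_of_nonneg_right (hP t ht) (sq_nonneg t)).trans ?_
    have := mul_le_mul_of_nonneg_left (s_bounds ht).2.2 (show 0 ≤ z ^ 3 + z ^ 2 by positivity)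
    linarith

/-! ### The kernel `1 / (exp t - 1) - 1 / t` -/

/-- The regularized Bose kernel `1 / (exp t - 1) - 1 / t`, which tends to `-1 / 2` at `0⁺` and to `0`
at infinity, with derivative `1 / t ^ 2 - s t`. The value at `t = 0` is junk. -/
noncomputable def F (t : ℝ) : ℝ := 1 / (Real.exp t - 1) - 1 / t

lemma F_bounds {t : ℝ} (ht : 0 < t) : |F t + 1 / 2| ≤ t ∧ |F t| ≤ 1 / t := by
  have h0 := Real.add_one_lt_exp ht.ne'
  have h1 : 0 < Real.exp t - 1 := by linarith
  have hu : F t ≤ 0 := by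
    unfold F
    rw [sub_nonpos]
    exact one_div_le_one_div_of_le ht (by linarith)
  have hl : -(1 / t) ≤ F t := by
    unfold F
    have : 0 < 1 / (Real.exp t - 1) := by positivity
    linarith
  refine ⟨?_, abs_le.2 ⟨hl, hu.trans (by positivity)⟩⟩
  have hq := Real.quadratic_le_exp_of_nonneg ht.le
  have e : F t + 1 / 2 = (t * Real.exp t + t + 2 - 2 * Real.exp t) / (2 * t * (Real.exp t - 1)) := by
    unfold F; field_simp; ring
  -- Equivalently `t - 2 + (t + 2) exp (-t) ≥ 0`, a function which vanishes at `0` and is increasing.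
  have hm : Real.exp t * (2 - t) ≤ t + 2 := by
    have h4 : Real.exp t * Real.exp (-t) = 1 := by rw [← Real.exp_add]; simp
    have hmono : MonotoneOn (fun x : ℝ ↦ x - 2 + (x + 2) * Real.exp (-x)) (Ici 0) := by
      refine monotoneOn_of_deriv_nonneg (convex_Ici 0) (by fun_prop) (by fun_prop) ?_
      intro x hx
      rw [interior_Ici] at hx
      have hd : HasDerivAt (fun x : ℝ ↦ x - 2 + (x + 2) * Real.exp (-x))
          (1 + (1 * Real.exp (-x) + (x + 2) * (Real.exp (-x) * (-1)))) x :=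
        ((hasDerivAt_id x).sub_const 2).add
          (((hasDerivAt_id x).add_const 2).mul ((hasDerivAt_neg x).exp))
      rw [hd.deriv]
      have h5 : Real.exp x * Real.exp (-x) = 1 := by rw [← Real.exp_add]; simp
      nlinarith [Real.add_one_le_exp x, Real.exp_pos (-x)]
    have := hmono self_mem_Ici ht.le ht.le
    norm_num at this
    nlinarith [Real.exp_pos t]
  rw [e, abs_of_nonneg (div_nonneg (by linarith) (by positivity)), div_le_iff₀ (by positivity)]
  rcases le_total t 2 with h | h
  · nlinarith [mul_nonneg (sub_nonneg.2 h) (sub_nonneg.2 hq), sq_nonneg t, pow_pos ht 3]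
  · nlinarith [mul_nonneg (sub_nonneg.2 h) (sub_nonneg.2 hq), sq_nonneg t, pow_pos ht 3]

lemma tendsto_F_zero : Tendsto F (𝓝[>] 0) (𝓝 (-1 / 2)) := by
  rw [tendsto_iff_norm_sub_tendsto_zero]
  refine squeeze_zero' (Eventually.of_forall fun t ↦ norm_nonneg _) ?_
    (tendsto_id.mono_left (nhdsWithin_le_nhds (s := Ioi (0:ℝ))))
  filter_upwards [self_mem_nhdsWithin] with t ht
  have := (F_bounds ht).1
  rw [Real.norm_eq_abs]
  have e : F t - -1 / 2 = F t + 1 / 2 := by ring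
  rw [e]
  exact this

lemma tendsto_F_atTop : Tendsto F atTop (𝓝 0) := by
  refine squeeze_zero_norm' (a := fun t ↦ 1 / t) ?_ (by simpa using tendsto_inv_atTop_zero (𝕜 := ℝ))
  filter_upwards [eventually_gt_atTop 0] with t ht
  exact (F_bounds ht).2

lemma continuousOn_F : ContinuousOn F (Ioi 0) := by
  refine ContinuousOn.sub ?_ ?_
  · exact ContinuousOn.div (by fun_prop) (by fun_prop) fun t ht ↦ exp_sub_one_ne ht
  · exact ContinuousOn.div (by fun_prop) (by fun_prop) fun t ht ↦ ne_of_gt ht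

lemma integral_F_deriv :
    IntegrableOn (fun t ↦ 1 / t ^ 2 - s t) (Ioi 0) ∧
    ∫ t in Ioi 0, (1 / t ^ 2 - s t) = 1 / 2 := by
  -- Correct the junk value at `0` to the right limit, so that the fundamental theorem of calculus
  -- applies on `[0, ∞)`.
  set g : ℝ → ℝ := Function.update F 0 (-1 / 2) with hg
  have hcont : ContinuousWithinAt g (Ici 0) 0 := by
    rw [hg, continuousWithinAt_update_same, Ici_sdiff_left]
    exact tendsto_F_zero
  have hev : ∀ x ∈ Ioi (0 : ℝ), g =ᶠ[𝓝 x] F := by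
    intro x hx
    filter_upwards [Ioi_mem_nhds hx] with y hy
    exact Function.update_of_ne (ne_of_gt hy) _ _
  have hderiv : ∀ x ∈ Ioi (0 : ℝ), HasDerivAt g (1 / x ^ 2 - s x) x := by
    intro x hx
    have hx' : x ≠ 0 := ne_of_gt hx
    refine HasDerivAt.congr_of_eventuallyEq ?_ (hev x hx)
    have h1 := ((Real.hasDerivAt_exp x).sub_const 1).inv (exp_sub_one_ne hx)
    have h2 := hasDerivAt_inv hx'
    have h3 := h1.sub h2
    convert! h3 using 1
    · funext t; simp [F]
    · simp only [s]; field_simp; ring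
  have hpos : ∀ x ∈ Ioi (0 : ℝ), 0 ≤ 1 / x ^ 2 - s x := by
    intro x hx
    have hx' : 0 < x := hx
    rw [sub_nonneg, le_div_iff₀ (by positivity)]
    exact (s_bounds hx).2.1
  have htop : Tendsto g atTop (𝓝 0) := by
    refine tendsto_F_atTop.congr' ?_
    filter_upwards [eventually_gt_atTop 0] with t ht
    exact (Function.update_of_ne (ne_of_gt ht) _ _).symm
  refine ⟨integrableOn_Ioi_deriv_of_nonneg hcont hderiv hpos htop, ?_⟩
  rw [integral_Ioi_of_hasDerivAt_of_nonneg hcont hderiv hpos htop]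
  simp [hg]; norm_num

/-- Frullani's integral of `F` between the scales `1` and `z`. -/
lemma integral_F_frullani {z : ℝ} (hz : 0 < z) :
    IntegrableOn (fun t ↦ t⁻¹ • (F (1 * t) - F (z * t))) (Ioi 0) ∧
    ∫ t in Ioi 0, t⁻¹ • (F (1 * t) - F (z * t)) = -(Real.log z) / 2 := by
  have hint : IntegrableOn (fun t ↦ t⁻¹ • (F (1 * t) - F (z * t))) (Ioi 0) := by
    refine integrableOn_of_bounds (A := 1 + z) (B := 1 + 1 / z) ?_ ?_ ?_
    · refine ContinuousOn.smul (continuousOn_inv₀.mono fun x hx ↦ ne_of_gt hx) ?_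
      refine ContinuousOn.sub ?_ ?_
      · exact continuousOn_F.comp (by fun_prop) fun x hx ↦ by simpa using! hx
      · exact continuousOn_F.comp (by fun_prop) fun x hx ↦ mul_pos hz hx
    · intro t ht
      have h1 := abs_le.1 (F_bounds ht).1
      have h2 := abs_le.1 (F_bounds (mul_pos hz ht)).1
      rw [smul_eq_mul, abs_mul, abs_inv, abs_of_pos ht, inv_mul_le_iff₀ ht, one_mul, abs_le]
      constructor <;> linarith
    · intro t ht
      have h1 := abs_le.1 (F_bounds ht).2
      have h2 := abs_le.1 (F_bounds (mul_pos hz ht)).2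
      have h3 : |F t - F (z * t)| ≤ (1 + 1 / z) / t := by
        have : (1 + 1 / z) / t = 1 / t + 1 / (z * t) := by field_simp
        rw [abs_le]
        constructor <;> linarith
      rw [smul_eq_mul, abs_mul, abs_inv, abs_of_pos ht, one_mul]
      rw [le_div_iff₀ ht] at h3
      calc _ = |F t - F (z * t)| * t := by field_simp
        _ ≤ _ := h3
  refine ⟨hint, ?_⟩
  rw [Frullani.integral_Ioi_eq (continuousOn_F.locallyIntegrableOn measurableSet_Ioi) one_pos hz
    tendsto_F_zero tendsto_F_atTop hint]
  simp only [smul_eq_mul, div_one]; ring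

/-! ### Decomposition of the integrand -/

/-- The integrand after `x = z t`, using `(cosh x - 1) / (exp x - 1) = (1 - exp (-x)) / 2`. -/
lemma integrand_decomp {z t : ℝ} (hz : 0 < z) (ht : 0 < t) :
    z * (((Real.cosh (z * t) - 1) / (2 * Real.sinh (z * t / (2 * z)) ^ 2) - z ^ 2) /
          (z * t * (Real.exp (z * t) - 1))) =
      s t * (P z t / t) + (z ^ 2 - z) * (1 / t ^ 2 - s t) +
        z ^ 2 * (t⁻¹ • (F (1 * t) - F (z * t))) := by
  have hzt := mul_pos hz ht
  have h1 := exp_sub_one_ne ht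
  have h2 := exp_sub_one_ne hzt
  have hs : z * t / (2 * z) = t / 2 := by field_simp
  have hsh : 2 * Real.sinh (t / 2) ^ 2 = (Real.exp t - 1) ^ 2 / (2 * Real.exp t) := by
    have h4 := Real.exp_pos (t / 2)
    have h2 : Real.exp t = Real.exp (t / 2) ^ 2 := by rw [← Real.exp_nat_mul]; congr 1; push_cast; ring
    rw [Real.sinh_eq, Real.exp_neg, h2]
    field_simp
  have he := Real.exp_pos t
  have hez := Real.exp_pos (z * t)
  rw [hs, hsh, Real.cosh_eq]
  simp only [s, P, F, smul_eq_mul, one_mul, Real.exp_neg]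
  generalize Real.exp (z * t) = u at *
  generalize Real.exp t = v at *
  field_simp
  ring

end BarnesG

/-- For every real `z > 0`,
`∫₀^∞ ((cosh x - 1)/(2 sinh²(x/(2z))) - z²)/(x(eˣ-1)) dx
  = ln G(z+1) - (z²/2)·ln z + ((z²-z)/2)·ln(2π)`. -/
theorem universal_integral_eq_log_barnesG (z : ℝ) (hz : 0 < z) :
    (∫ x in Ioi (0 : ℝ),
        ((Real.cosh x - 1) / (2 * Real.sinh (x / (2 * z)) ^ 2) - z ^ 2) /
          (x * (Real.exp x - 1))) =
      Real.log (barnesGSucc z) - z ^ 2 / 2 * Real.log z +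
        ((z ^ 2 - z) / 2) * Real.log (2 * π) := by
  have hS := (BarnesG.hasSum_integral hz).add (BarnesG.hasSum_term_one.mul_left (z ^ 2))
  simp only [sub_add_cancel] at hS
  rw [BarnesG.log_barnesGSucc hz hS]
  obtain ⟨i2, e2⟩ := BarnesG.integral_F_deriv
  obtain ⟨i3, e3⟩ := BarnesG.integral_F_frullani hz
  have i1 := BarnesG.integrableOn_sP hz
  have i12 : Integrable (fun t ↦ BarnesG.s t * (BarnesG.P z t / t) +
      (z ^ 2 - z) * (1 / t ^ 2 - BarnesG.s t)) (volume.restrict (Ioi 0)) :=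
    Integrable.add i1 (i2.const_mul (z ^ 2 - z))
  -- Substitute `x = z t`, so that the dependence on `1 / z` inside `sinh` disappears.
  have hsub := integral_comp_mul_left_Ioi' (fun x : ℝ ↦
    ((Real.cosh x - 1) / (2 * Real.sinh (x / (2 * z)) ^ 2) - z ^ 2) /
      (x * (Real.exp x - 1))) 0 hz
  rw [mul_zero, smul_eq_mul, ← integral_const_mul] at hsub
  rw [← hsub,
    setIntegral_congr_fun measurableSet_Ioi fun t ht ↦ BarnesG.integrand_decomp hz ht,
    integral_add i12 (i3.const_mul _), integral_add i1 (i2.const_mul _), integral_const_mul, integral_const_mul, e2, e3]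
  ring
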